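/- If (T, <_T) is a tree of height and size ω₁, then the forcing notion (T, ≥_T) is proper for models of size ω₁. -/

import Mathlib

noncomputable section
namespace GuessingPaper

/- Framework: we work in Mathlib's model `ZFSet` of ZFC, viewed as the ground
model `V`.  A generic extension `V[G]` is represented via a (hypothetical)
`V`-generic filter `G : Set ZFSet`; subsets of ground-model sets belonging to
`V[G]` are represented as classes `x : Set ZFSet` of the form
`{y | ∃ p ∈ G, (y, p) ∈ A}` for some ground set `A` (this is exactly the class
of `G`-evaluations of `ℙ`-names for subsets of ground sets). -/



open FirstOrder

/-- `x` is a (von Neumann) ordinal. -/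
def IsOrd (x : ZFSet) : Prop := x.IsOrdinal

/-- `x` is countable. -/
def Ctble (x : ZFSet) : Prop := x.toSet.Countable

/-- iterated unions, for the transitive closure -/
def unions : ℕ → ZFSet → ZFSet
  | 0, x => x
  | n + 1, x => ZFSet.sUnion (unions n x)

/-- the transitive closure of `x` (as a class) -/
def tcl (x : ZFSet) : Set ZFSet := ⋃ n : ℕ, (unions n x).toSet

/-- `H_θ`: the class of sets hereditarily of cardinality `< θ`. -/
def HSet (θ : Cardinal) : Set ZFSet := {x | Cardinal.mk ↥(tcl x) < θ}

/-- `x` is a member of `ω₂`, i.e. an ordinal of cardinality `≤ ℵ₁`. -/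
def MemOmega2 (x : ZFSet) : Prop := IsOrd x ∧ Cardinal.mk ↥x.toSet ≤ Cardinal.aleph 1

/-- `M` has size `ω₁`. -/
def SizeOmega1 (M : ZFSet) : Prop := Cardinal.mk ↥M.toSet = Cardinal.aleph 1

/-- `𝒫_{ω₂}(H_θ)`: subsets of `H_θ` of size `< ω₂`. -/
def Pom2 (θ : Cardinal) : Set ZFSet :=
  {M | M.toSet ⊆ HSet θ ∧ Cardinal.mk ↥M.toSet < Cardinal.aleph 2}

/-- `ω₁ ⊆ M`: every countable ordinal belongs to `M`. -/
def Omega1Sub (M : ZFSet) : Prop := ∀ x, IsOrd x → Ctble x → x ∈ M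

/-- `M ∩ ω₂ ∈ ω₂`. -/
def CapOmega2 (M : ZFSet) : Prop :=
  ∃ δ, MemOmega2 δ ∧ ∀ x, MemOmega2 x → (x ∈ M ↔ x ∈ δ)

/-- the ∈-structure on a class of sets, in the language with one binary relation -/
def memStructure (S : Set ZFSet) : Language.order.Structure S :=
  @Language.orderStructure S ⟨fun x y => (x : ZFSet) ∈ (y : ZFSet)⟩

/-- `M ≺ N` : `M` is an elementary submodel of `N` (as ∈-structures). -/
def ElemSub (M N : Set ZFSet) : Prop :=
  M ⊆ N ∧ ∀ (k : ℕ) (φ : Language.order.Formula (Fin k)) (v : Fin k → ZFSet)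
    (hM : ∀ i, v i ∈ M) (hN : ∀ i, v i ∈ N),
    (@Language.Formula.Realize _ _ (memStructure M) _ φ (fun i => ⟨v i, hM i⟩)) ↔
    (@Language.Formula.Realize _ _ (memStructure N) _ φ (fun i => ⟨v i, hN i⟩))

/-! ### Guessing models (in `V`) -/

/-- `x` is bounded in `M`. -/
def BoundedIn (M x : ZFSet) : Prop := ∃ X, X ∈ M ∧ x ⊆ X

/-- `x` is `ω₁`-approximated in `M`. -/
def ApproxIn (M x : ZFSet) : Prop := ∀ a, a ∈ M → Ctble a → a ∩ x ∈ M

/-- `x` is guessed in `M`. -/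
def GuessedIn (M x : ZFSet) : Prop := ∃ y, y ∈ M ∧ y ∩ M = x ∩ M

/-- `M` is an `ω₁`-guessing set. -/
def IsGuessing (M : ZFSet) : Prop :=
  ∀ x : ZFSet, BoundedIn M x → (ApproxIn M x ↔ GuessedIn M x)



/-! ### Forcing -/

/-- `p ≤ q` in the order coded by the set of (Kuratowski) pairs `le`. -/
def Le (le p q : ZFSet) : Prop := ZFSet.pair p q ∈ le

/-- `(P, le)` is a forcing notion: `le` is a preorder on `P`, coded as a set of pairs. -/
def IsForcing (P le : ZFSet) : Prop :=
  (∀ x ∈ le, ∃ p ∈ P, ∃ q ∈ P, x = ZFSet.pair p q) ∧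
  (∀ p ∈ P, Le le p p) ∧
  (∀ p q r : ZFSet, Le le p q → Le le q r → Le le p r)

/-- `p` and `q` are compatible. -/
def Compat (P le p q : ZFSet) : Prop := ∃ r, r ∈ P ∧ Le le r p ∧ Le le r q

/-- `D` is a dense subset of the forcing `(P, le)`. -/
def DenseSub (P le D : ZFSet) : Prop := D ⊆ P ∧ ∀ p ∈ P, ∃ q ∈ D, Le le q p

/-- the class `D` is dense in `(P, le)`. -/
def DenseClass (P le : ZFSet) (D : Set ZFSet) : Prop :=
  (∀ p ∈ D, p ∈ P) ∧ ∀ p ∈ P, ∃ q ∈ D, Le le q p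

/-- the class `D` is predense below `p`. -/
def PredenseBelow (P le : ZFSet) (D : Set ZFSet) (p : ZFSet) : Prop :=
  ∀ r, r ∈ P → Le le r p → ∃ s ∈ D, Compat P le s r

/-- `q` is an `(M, ℙ)`-generic condition. -/
def MGenericCond (P le M q : ZFSet) : Prop :=
  ∀ D : ZFSet, DenseSub P le D → D ∈ M →
    PredenseBelow P le {s | s ∈ M ∧ s ∈ D} q

/-- `G` is a filter on `(P, le)`. -/
def IsVFilter (P le : ZFSet) (G : Set ZFSet) : Prop :=
  G.Nonempty ∧ (∀ p ∈ G, p ∈ P) ∧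
  (∀ p ∈ G, ∀ q, q ∈ P → Le le p q → q ∈ G) ∧
  (∀ p ∈ G, ∀ q ∈ G, ∃ r ∈ G, Le le r p ∧ Le le r q)

/-- `G` is a `V`-generic filter on `(P, le)`: it meets every dense subset
(all of which belong to the ambient universe `V`). -/
def VGeneric (P le : ZFSet) (G : Set ZFSet) : Prop :=
  IsVFilter P le G ∧ ∀ D : ZFSet, DenseSub P le D → ∃ p ∈ G, p ∈ D

/-- the class `x` is a set of the generic extension `V[G]` (as a subset of `V`):
it is the evaluation by `G` of a `ℙ`-name for a subset of a ground-model set. -/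
def InExt (G : Set ZFSet) (x : Set ZFSet) : Prop :=
  ∃ A : ZFSet, x = {y | ∃ p ∈ G, ZFSet.pair y p ∈ A}

/-- the class `x` is (coded by) a set of the ground model `V`. -/
def InV (x : Set ZFSet) : Prop := ∃ z : ZFSet, x = z.toSet

/-- evaluation of a `ℙ`-name `τ` by a filter `G`:
`val G τ = { val G σ ∣ ∃ p ∈ G, (σ, p) ∈ τ }` (by `∈`-recursion). -/
def val (G : Set ZFSet) : ZFSet → ZFSet :=
  (ZFSet.mem_wf.transGen).fix fun τ IH =>
    @ZFSet.image
      (fun σ => @dite ZFSet (Relation.TransGen (· ∈ ·) σ τ) (Classical.dec _)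
        (fun h => IH σ h) (fun _ => ∅))
      (Classical.allZFSetDefinable _)
      (ZFSet.sep (fun σ => ∃ p ∈ G, ZFSet.pair σ p ∈ τ)
        (ZFSet.sUnion (ZFSet.sUnion τ)))

/-- `M[G]`: the class of evaluations by `G` of names belonging to `M`. -/
def MExt (G : Set ZFSet) (M : ZFSet) : Set ZFSet := {x | ∃ τ, τ ∈ M ∧ val G τ = x}




/-! ### Notions of the generic extension `V[G]` -/

/-- `a` is countable in `V[G]`: there is an enumeration of `a` by `ω` in `V[G]`. -/
def CtbleExt (G : Set ZFSet) (a : ZFSet) : Prop :=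
  ∃ R : Set ZFSet, InExt G R ∧
    (∀ z ∈ R, ∃ n, n ∈ ZFSet.omega ∧ ∃ y, y ∈ a ∧ z = ZFSet.pair n y) ∧
    (∀ n y y', ZFSet.pair n y ∈ R → ZFSet.pair n y' ∈ R → y = y') ∧
    (∀ y, y ∈ a → ∃ n, n ∈ ZFSet.omega ∧ ZFSet.pair n y ∈ R)

/-- in `V[G]`, the set (coded by) `x` is `ω₁`-approximated in `M`. -/
def ApproxInExt (G : Set ZFSet) (M : ZFSet) (x : Set ZFSet) : Prop :=
  ∀ a, a ∈ M → CtbleExt G a → ∃ z, z ∈ M ∧ z.toSet = a.toSet ∩ x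

/-- the set (coded by) `x` is guessed in `M`. -/
def GuessedInExt (M : ZFSet) (x : Set ZFSet) : Prop :=
  ∃ y, y ∈ M ∧ y.toSet ∩ M.toSet = x ∩ M.toSet

/-- `M` is an `ω₁`-guessing set in the generic extension `V[G]`. -/
def GuessingInExt (G : Set ZFSet) (M : ZFSet) : Prop :=
  ∀ x : Set ZFSet, InExt G x → (∃ X, X ∈ M ∧ x ⊆ X.toSet) →
    (ApproxInExt G M x ↔ GuessedInExt M x)

/-- in `V[G]` there is a surjection from `ω` onto `ω₁^V` (i.e. `ω₁` is collapsed). -/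
def CollapsesOmega1 (G : Set ZFSet) : Prop :=
  ∃ R : Set ZFSet, InExt G R ∧
    (∀ n y y', ZFSet.pair n y ∈ R → ZFSet.pair n y' ∈ R → y = y') ∧
    (∀ x, IsOrd x → Ctble x → ∃ n, n ∈ ZFSet.omega ∧ ZFSet.pair n x ∈ R)

/-- in `V[G]` there is a surjection from an ordinal `< ω₂^V` onto `ω₂^V`. -/
def CollapsesOmega2 (G : Set ZFSet) : Prop :=
  ∃ δ : ZFSet, IsOrd δ ∧ Cardinal.mk ↥δ.toSet ≤ Cardinal.aleph 1 ∧
    ∃ R : Set ZFSet, InExt G R ∧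
      (∀ β y y', ZFSet.pair β y ∈ R → ZFSet.pair β y' ∈ R → y = y') ∧
      (∀ x, MemOmega2 x → ∃ β, β ∈ δ ∧ ZFSet.pair β x ∈ R)

/-- the class `x` has size `< ω₂` in `V[G]`: in `V[G]` it is the surjective image of an
ordinal of size `≤ ℵ₁`. -/
def LtOmega2Ext (G : Set ZFSet) (x : Set ZFSet) : Prop :=
  ∃ δ : ZFSet, IsOrd δ ∧ Cardinal.mk ↥δ.toSet ≤ Cardinal.aleph 1 ∧
    ∃ R : Set ZFSet, InExt G R ∧
      (∀ β y y', ZFSet.pair β y ∈ R → ZFSet.pair β y' ∈ R → y = y') ∧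
      (∀ y ∈ x, ∃ β, β ∈ δ ∧ ZFSet.pair β y ∈ R)


/-! ### Stationarity, properness, and the guessing-model principles -/

/-- `M` is closed under `F` (viewed as a function on finite subsets). -/
def ClosedUnderF (F : ZFSet → ZFSet) (M : ZFSet) : Prop :=
  ∀ a : ZFSet, a ⊆ M → a.toSet.Finite → F a ⊆ M

/-- `F` maps `𝒫_ω(H_θ)` into `𝒫_{ω₂}(H_θ)`. -/
def GoodF (θ : Cardinal) (F : ZFSet → ZFSet) : Prop :=
  ∀ a : ZFSet, a.toSet ⊆ HSet θ → a.toSet.Finite →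
    (F a).toSet ⊆ HSet θ ∧ Cardinal.mk ↥(F a).toSet < Cardinal.aleph 2

/-- `S` is stationary in `𝒫_{ω₂}(H_θ)`: every `F : 𝒫_ω(H_θ) → 𝒫_{ω₂}(H_θ)` has a closure
point `M ≺ H_θ` in `S` with `M ∩ ω₂ ∈ ω₂`. -/
def Stationary (θ : Cardinal) (S : Set ZFSet) : Prop :=
  ∀ F : ZFSet → ZFSet, GoodF θ F →
    ∃ M ∈ S, ElemSub M.toSet (HSet θ) ∧ CapOmega2 M ∧ ClosedUnderF F M

/-- the value `F(a)` of the function (of `V[G]`) coded by the relation `R`. -/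
def FExtVal (R : Set ZFSet) (a : ZFSet) : Set ZFSet := {y | ZFSet.pair a y ∈ R}

/-- the relation `R` codes a function `F : 𝒫_ω(H_θ^V) → 𝒫_{ω₂}(H_θ^V)` of `V[G]`. -/
def GoodFExt (G : Set ZFSet) (θ : Cardinal) (R : Set ZFSet) : Prop :=
  ∀ a : ZFSet, a.toSet ⊆ HSet θ → a.toSet.Finite →
    FExtVal R a ⊆ HSet θ ∧ LtOmega2Ext G (FExtVal R a)

/-- in `V[G]`, the set `S` (of the ground model) is stationary in `𝒫_{ω₂}(H_θ^V)`:
every function `F : 𝒫_ω(H_θ^V) → 𝒫_{ω₂}(H_θ^V)` belonging to `V[G]` has a closure point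
`M ≺ H_θ^V` in `S` with `M ∩ ω₂ ∈ ω₂`. -/
def StationaryExt (G : Set ZFSet) (θ : Cardinal) (S : Set ZFSet) : Prop :=
  ∀ R : Set ZFSet, InExt G R → GoodFExt G θ R →
    ∃ M ∈ S, ElemSub M.toSet (HSet θ) ∧ CapOmega2 M ∧
      ∀ a : ZFSet, a ⊆ M → a.toSet.Finite → FExtVal R a ⊆ M.toSet

/-- the forcing `(P, le)` is proper for the family `S` of models. -/
def ProperFor (P le : ZFSet) (S : Set ZFSet) : Prop :=
  ∀ M ∈ S, ∀ p, p ∈ M → p ∈ P → ∃ q, q ∈ P ∧ Le le q p ∧ MGenericCond P le M q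

/-- the forcing `(P, le)` is proper for models of size `ω₁`, i.e. for all
`M ≺ (H_θ, ∈, ℙ)` with `ω₁ ⊆ M` and `|M| = ω₁`, for every sufficiently large regular `θ`. -/
def ProperForSizeOmega1 (P le : ZFSet) : Prop :=
  ∃ θ₀ : Cardinal, ∀ θ : Cardinal, θ₀ ≤ θ → θ.IsRegular →
    ProperFor P le {M | ElemSub M.toSet (HSet θ) ∧ P ∈ M ∧ le ∈ M ∧
      Omega1Sub M ∧ SizeOmega1 M}

/-- the forcing `(P, le)` preserves `ω₁`. -/
def PreservesOmega1 (P le : ZFSet) : Prop :=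
  ∀ G : Set ZFSet, VGeneric P le G → ¬ CollapsesOmega1 G

/-- the forcing `(P, le)` preserves the cardinal `ω₂`. -/
def PreservesOmega2 (P le : ZFSet) : Prop :=
  ∀ G : Set ZFSet, VGeneric P le G → ¬ CollapsesOmega2 G

/-- the forcing `(P, le)` has the `ω₁`-approximation property. -/
def ApproxProp (P le : ZFSet) : Prop :=
  ∀ G : Set ZFSet, VGeneric P le G →
    ∀ x : Set ZFSet, InExt G x → (∃ X : ZFSet, x ⊆ X.toSet) →
      (∀ a : ZFSet, Ctble a → InV (a.toSet ∩ x)) → InV x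

/-- `GMP(ω₂)`: for every regular `θ ≥ ω₂`, the `ω₁`-guessing elementary submodels of `H_θ`
of size `ω₁` are stationary in `𝒫_{ω₂}(H_θ)`. -/
def GMP : Prop :=
  ∀ θ : Cardinal.{1}, Cardinal.aleph 2 ≤ θ → θ.IsRegular →
    Stationary θ {M | M ∈ Pom2 θ ∧ ElemSub M.toSet (HSet θ) ∧ SizeOmega1 M ∧ IsGuessing M}

/-- `M` is indestructibly `ω₁`-guessing: it is `ω₁`-guessing and remains so in any
generic extension by an `ω₁`-preserving forcing. -/
def IndestructiblyGuessing (M : ZFSet) : Prop :=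
  IsGuessing M ∧ ∀ P le : ZFSet, IsForcing P le → PreservesOmega1 P le →
    ∀ G : Set ZFSet, VGeneric P le G → GuessingInExt G M

/-- `IGMP(ω₂)`: for every regular `θ ≥ ω₂` there are stationarily many indestructibly
`ω₁`-guessing `M ∈ 𝒫_{ω₂}(H_θ)`. -/
def IGMP : Prop :=
  ∀ θ : Cardinal.{1}, Cardinal.aleph 2 ≤ θ → θ.IsRegular →
    Stationary θ {M | M ∈ Pom2 θ ∧ IndestructiblyGuessing M}

/-- `ℙ-IGMP(ω₂)`: for every sufficiently large regular `θ`, the `ω₁`-guessing sets of size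
`ω₁` that remain `ω₁`-guessing after forcing with `ℙ = (P, le)` are stationary in
`𝒫_{ω₂}(H_θ)`. -/
def PIGMP (P le : ZFSet) : Prop :=
  ∃ θ₀ : Cardinal, ∀ θ : Cardinal, θ₀ ≤ θ → θ.IsRegular →
    Stationary θ {M | M ∈ Pom2 θ ∧ SizeOmega1 M ∧ IsGuessing M ∧
      ∀ G : Set ZFSet, VGeneric P le G → GuessingInExt G M}

/-- `FA({ℙ}, ω₁)`: for every family of `ω₁`-many dense subsets of `ℙ = (P, le)` there is a
filter meeting all of them. -/
def FAomega1 (P le : ZFSet) : Prop :=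
  ∀ D : Set ZFSet, (∀ d ∈ D, DenseSub P le d) → Cardinal.mk ↥D ≤ Cardinal.aleph 1 →
    ∃ G : Set ZFSet, IsVFilter P le G ∧ ∀ d ∈ D, ∃ p ∈ G, p ∈ d



/-- `s <_T t` in the tree order coded by the set of pairs `lt`. -/
def Lt (lt s t : ZFSet) : Prop := ZFSet.pair s t ∈ lt

/-- `(T, lt)` is a tree: a strict partial order in which the predecessors of every node
are well-ordered. -/
def IsTree (T lt : ZFSet) : Prop :=
  (∀ x ∈ lt, ∃ s ∈ T, ∃ t ∈ T, x = ZFSet.pair s t) ∧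
  (∀ t ∈ T, ¬ Lt lt t t) ∧
  (∀ s t u : ZFSet, Lt lt s t → Lt lt t u → Lt lt s u) ∧
  (∀ t ∈ T, ∀ s, Lt lt s t → ∀ s', Lt lt s' t → s = s' ∨ Lt lt s s' ∨ Lt lt s' s) ∧
  (∀ t ∈ T, ∀ S : Set ZFSet, (∀ s ∈ S, Lt lt s t) → S.Nonempty →
    ∃ m ∈ S, ∀ s ∈ S, m = s ∨ Lt lt m s)

/-- `f` is an order isomorphism from the ordinal `α` onto the set of `lt`-predecessors
of `t`. -/
def IsoOntoPred (lt α t f : ZFSet) : Prop :=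
  (∀ z ∈ f, ∃ β, β ∈ α ∧ ∃ s, Lt lt s t ∧ z = ZFSet.pair β s) ∧
  (∀ β, β ∈ α → ∃ s, ZFSet.pair β s ∈ f) ∧
  (∀ β s s', ZFSet.pair β s ∈ f → ZFSet.pair β s' ∈ f → s = s') ∧
  (∀ s, Lt lt s t → ∃ β, β ∈ α ∧ ZFSet.pair β s ∈ f) ∧
  (∀ β β' s s', ZFSet.pair β s ∈ f → ZFSet.pair β' s' ∈ f → (β ∈ β' ↔ Lt lt s s'))

/-- the tree `(T, lt)` has height `ω₁`: every node has countably many predecessors, and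
every countable ordinal is the order type of the predecessors of some node. -/
def HeightOmega1 (T lt : ZFSet) : Prop :=
  (∀ t ∈ T, {s | Lt lt s t}.Countable) ∧
  (∀ α : ZFSet, IsOrd α → Ctble α → ∃ t ∈ T, ∃ f : ZFSet, IsoOntoPred lt α t f)

/-- the reversed tree order `≥_T` (the forcing order of `(T, ≥_T)`), as a set of pairs. -/
def revLe (T lt : ZFSet) : ZFSet :=
  ZFSet.sep
    (fun z => ∃ s, s ∈ T ∧ ∃ t, t ∈ T ∧ z = ZFSet.pair s t ∧ (s = t ∨ Lt lt t s))
    (ZFSet.powerset (ZFSet.powerset T))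

/-
Every dense `D ∈ M` is a subset of `T`, so as soon as `T ⊆ M` we have `M ∩ D = D` and every
condition is `(M, ℙ)`-generic. To see that `T ⊆ M`, note that `H_θ` contains a function from
ordinals onto `T` all of whose arguments have smaller cardinality than `T`, hence are countable.
Being such a function is first-order over `H_θ` with parameter `T`: a witness to `|x| ≤ |y|` is a
set of at most `|x|` pairs, so it lies in `H_θ` whenever `x` and `y` do. By elementarity one such
function lies in `M`, and since `ω₁ ⊆ M`, so do its arguments and then its values.
-/

section ModelTheory

variable {L : Language} {X Y : Type*} [L.Structure X] [L.Structure Y]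

theorem meetsDefinable_range (e : X ↪ₑ[L] Y) : L.MeetsDefinable (Set.range e) := by
  let S : L.ElementarySubstructure Y :=
    ⟨e.toHom.range, fun n φ x => by
      let ρ := e.toEmbedding.equivRange
      have hx : ((↑) ∘ x : Fin n → Y) = e ∘ ρ.symm ∘ x := by
        funext i
        exact congrArg Subtype.val (ρ.apply_symm_apply (x i)).symm
      rw [hx, e.map_formula]
      exact ρ.symm.toElementaryEmbedding.map_formula φ x⟩
  have hS : (S : Set Y) = Set.range e := by
    ext y
    exact Language.Hom.mem_range
  exact hS ▸ S.meetsDefinable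

variable {A : Set X} {α : Type*}

theorem definable_imp {p q : (α → X) → Prop} (hp : A.Definable L {v | p v})
    (hq : A.Definable L {v | q v}) : A.Definable L {v | p v → q v} := by
  simpa only [imp_iff_not_or] using! hp.compl.union hq

-- In the index type `Option α`, `none` is the coordinate of the quantified variable.
theorem definable_exists {R : (α → X) → X → Prop}
    (h : A.Definable L {w : Option α → X | R (w ∘ some) (w none)}) :
    A.Definable L {v | ∃ x, R v x} := by
  have h' : A.Definable L {w : α ⊕ Unit → X | R (w ∘ Sum.inl) (w (Sum.inr ()))} :=
    h.preimage_comp (Option.elim · (Sum.inr ()) Sum.inl)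
  convert! h'.exists_of_finite using 1
  ext v
  exact ⟨fun ⟨x, hx⟩ => ⟨fun _ => x, hx⟩, fun ⟨u, hu⟩ => ⟨u (), hu⟩⟩

theorem definable_forall {R : (α → X) → X → Prop}
    (h : A.Definable L {w : Option α → X | R (w ∘ some) (w none)}) :
    A.Definable L {v | ∀ x, R v x} := by
  have hnot := (definable_exists (R := fun v x => ¬ R v x) h.compl).compl
  convert! hnot using 1
  ext v
  simp

end ModelTheory

/-- Makes the `∈`-structure on a class of sets available to instance search, so that Mathlib's
notion of definable set applies to it. -/
instance instMemStructure (S : Set ZFSet) : Language.order.Structure S := memStructure S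

theorem ElemSub.exists_mem {M N : Set ZFSet} (h : ElemSub M N) {β : Type*} [Finite β]
    {p : (Option β → N) → Prop} (hp : (∅ : Set N).Definable Language.order {w | p w})
    {c : β → N} (hc : ∀ i, (c i).1 ∈ M) (hx : ∃ x, p (Option.elim · x c)) :
    ∃ x, x.1 ∈ M ∧ p (Option.elim · x c) := by
  let e : M ↪ₑ[Language.order] N :=
    ⟨Set.inclusion h.1, fun n φ x =>
      (h.2 n φ (fun i => x i) (fun i => (x i).2) (fun i => h.1 (x i).2)).symm⟩
  have he : Set.range e = {x : N | x.1 ∈ M} := Set.range_inclusion h.1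
  have hF : (Set.range e).DefinableMap Language.order
      fun (v : Fin 1 → N) (o : Option β) => o.elim (v 0) c
    | none => .proj _
    | some i => Language.order.definableFun_const _ (he ▸ hc i)
  obtain ⟨x, hxp, hxM⟩ := meetsDefinable_range e {x | p (Option.elim · x c)} hx
    ((hp.mono (Set.empty_subset _)).preimage_map hF)
  exact ⟨x, he.subset hxM, hxp⟩

/-- A transitive class of sets; bounded quantifiers over its members are absolute. -/
def IsTransitiveClass (S : Set ZFSet) : Prop := ∀ x ∈ S, ∀ y ∈ x, y ∈ S

/-- The Kuratowski pairs `(a, b)` in `f` form the graph of a partial function `a ↦ b`; members of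
`f` that are not pairs are ignored. -/
def IsFunctional (f : ZFSet) : Prop :=
  ∀ a b c, ZFSet.pair a b ∈ f → ZFSet.pair a c ∈ f → b = c

section Definability

variable {S : Set ZFSet} {A : Set S} {α : Type*}

theorem definable_mem (i j : α) : A.Definable Language.order {v | (v i).1 ∈ (v j).1} := by
  have h : (∅ : Set S).Definable Language.order {v : α → S | (v i).1 ∈ (v j).1} :=
    Set.empty_definable_iff.2 ⟨Language.leSymb.formula₂ (.var i) (.var j), by
      ext v
      change _ ↔ Language.Formula.Realize _ v
      rw [Language.Formula.realize_rel₂]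
      rfl⟩
  exact h.mono (Set.empty_subset A)

theorem definable_coe_eq (i j : α) : A.Definable Language.order {v | (v i).1 = (v j).1} := by
  have h : A.Definable Language.order {v | v i = v j} :=
    Set.DefinableFun.ofPred_eq (.proj _) (.proj _)
  simpa only [Subtype.ext_iff] using h

theorem definable_exists_mem (hS : IsTransitiveClass S) {R : (α → S) → ZFSet → Prop} (i : α)
    (h : A.Definable Language.order {w : Option α → S | R (w ∘ some) (w none)}) :
    A.Definable Language.order {v | ∃ y ∈ (v i).1, R v y} := by
  have hbdd := definable_exists (R := fun v y => y.1 ∈ (v i).1 ∧ R v y)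
    ((definable_mem none (some i)).inter h)
  convert! hbdd using 1
  ext v
  exact ⟨fun ⟨y, hy, hR⟩ => ⟨⟨y, hS _ (v i).2 y hy⟩, hy, hR⟩, fun ⟨y, hy, hR⟩ => ⟨y, hy, hR⟩⟩

theorem definable_forall_mem (hS : IsTransitiveClass S) {R : (α → S) → ZFSet → Prop} (i : α)
    (h : A.Definable Language.order {w : Option α → S | R (w ∘ some) (w none)}) :
    A.Definable Language.order {v | ∀ y ∈ (v i).1, R v y} := by
  have hbdd := definable_forall (R := fun v y => y.1 ∈ (v i).1 → R v y)
    (definable_imp (definable_mem none (some i)) h)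
  convert! hbdd using 1
  ext v
  exact ⟨fun hv y => hv y, fun hv y hy => hv ⟨y, hS _ (v i).2 y hy⟩ hy⟩

theorem definable_isTransitive (hS : IsTransitiveClass S) (i : α) :
    A.Definable Language.order {v | (v i).1.IsTransitive} :=
  definable_forall_mem hS i (definable_forall_mem hS none (definable_mem none (some (some i))))

theorem definable_isOrdinal (hS : IsTransitiveClass S) (i : α) :
    A.Definable Language.order {v | (v i).1.IsOrdinal} := by
  simp only [ZFSet.isOrdinal_iff_forall_mem_isTransitive]
  exact (definable_isTransitive hS i).inter
    (definable_forall_mem hS i (definable_isTransitive hS none))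

theorem definable_eq_unorderedPair (hS : IsTransitiveClass S) (i j k : α) :
    A.Definable Language.order {v | (v i).1 = {(v j).1, (v k).1}} := by
  have h : A.Definable Language.order {v : α → S |
      ((v j).1 ∈ (v i).1 ∧ (v k).1 ∈ (v i).1) ∧
        ∀ y ∈ (v i).1, y = (v j).1 ∨ y = (v k).1} :=
    ((definable_mem j i).inter (definable_mem k i)).inter (definable_forall_mem hS i
      ((definable_coe_eq none (some j)).union (definable_coe_eq none (some k))))
  convert! h using 1
  ext v
  constructor
  · intro h
    simp_all
  · rintro ⟨⟨hj, hk⟩, h⟩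
    ext y
    rw [ZFSet.mem_pair]
    exact ⟨h y, by rintro (rfl | rfl) <;> assumption⟩

theorem definable_eq_pair (hS : IsTransitiveClass S) (i j k : α) :
    A.Definable Language.order {v | (v i).1 = ZFSet.pair (v j).1 (v k).1} := by
  have h : A.Definable Language.order {v : α → S | ∃ s ∈ (v i).1, ∃ p ∈ (v i).1,
      (s = {(v j).1, (v j).1} ∧ p = {(v j).1, (v k).1}) ∧ (v i).1 = {s, p}} :=
    definable_exists_mem hS i (definable_exists_mem hS (some i)
      (((definable_eq_unorderedPair hS (some none) (some (some j)) (some (some j))).inter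
        (definable_eq_unorderedPair hS none (some (some j)) (some (some k)))).inter
        (definable_eq_unorderedPair hS (some (some i)) (some none) none)))
  convert! h using 1
  ext v
  constructor
  · intro (h : (v i).1 = _)
    refine ⟨{(v j).1, (v j).1}, ?_, {(v j).1, (v k).1}, ?_, ⟨rfl, rfl⟩, ?_⟩ <;>
      simp [h, ZFSet.pair]
  · rintro ⟨s, -, p, -, ⟨rfl, rfl⟩, h⟩
    simpa [ZFSet.pair] using h

theorem definable_pair_mem (hS : IsTransitiveClass S) (i j k : α) :
    A.Definable Language.order {v | ZFSet.pair (v i).1 (v j).1 ∈ (v k).1} := by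
  have h : A.Definable Language.order {v : α → S | ∃ z ∈ (v k).1,
      z = ZFSet.pair (v i).1 (v j).1} :=
    definable_exists_mem hS k (definable_eq_pair hS none (some i) (some j))
  simpa only [exists_eq_right] using h

theorem IsTransitiveClass.mem_of_pair_mem (hS : IsTransitiveClass S) {f a b : ZFSet}
    (hf : f ∈ S) (h : ZFSet.pair a b ∈ f) : a ∈ S ∧ b ∈ S := by
  have hab : ({a, b} : ZFSet) ∈ S := hS _ (hS f hf _ h) _ (by simp [ZFSet.pair])
  exact ⟨hS _ hab a (by simp), hS _ hab b (by simp)⟩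

theorem definable_isFunctional (hS : IsTransitiveClass S) (i : α) :
    A.Definable Language.order {v | IsFunctional (v i).1} := by
  have h : A.Definable Language.order {v : α → S | ∀ a b c : S,
      ZFSet.pair a.1 b.1 ∈ (v i).1 → ZFSet.pair a.1 c.1 ∈ (v i).1 → b.1 = c.1} :=
    definable_forall (definable_forall (definable_forall (definable_imp
      (definable_pair_mem hS (some (some none)) (some none) (some (some (some i))))
      (definable_imp (definable_pair_mem hS (some (some none)) none (some (some (some i))))
        (definable_coe_eq (some none) none)))))
  convert! h using 1
  ext v
  constructor
  · exact fun h a b c => h a b c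
  · intro h a b c hb hc
    obtain ⟨ha, hbS⟩ := hS.mem_of_pair_mem (v i).2 hb
    exact h ⟨a, ha⟩ ⟨b, hbS⟩ ⟨c, (hS.mem_of_pair_mem (v i).2 hc).2⟩ hb hc

end Definability

section HereditaryCardinality

open scoped Cardinal

theorem mem_unions_succ (n : ℕ) (x z : ZFSet) :
    z ∈ unions (n + 1) x ↔ ∃ y ∈ x, z ∈ unions n y := by
  induction n generalizing z with
  | zero => simp [unions]
  | succ n ih =>
    rw [unions]
    simp only [ZFSet.mem_sUnion, ih]
    simp only [unions, ZFSet.mem_sUnion]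
    tauto

theorem tcl_eq (x : ZFSet) : tcl x = x.toSet ∪ ⋃ y : x.toSet, tcl y := by
  have htail : ⋃ n, (unions (n + 1) x).toSet = ⋃ y : x.toSet, tcl y := by
    ext z
    simp only [tcl, Set.mem_iUnion, Subtype.exists]
    exact (exists_congr fun n => mem_unions_succ n x z).trans (by tauto)
  rw [← htail]
  exact (Set.union_iUnion_nat_succ fun n => (unions n x).toSet).symm

variable {θ : Cardinal}

theorem isTransitiveClass_HSet (θ : Cardinal) : IsTransitiveClass (HSet θ) := by
  intro x hx y hy
  refine lt_of_le_of_lt (Cardinal.mk_le_mk_of_subset ?_) hx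
  rw [tcl_eq x]
  exact (Set.subset_iUnion (fun y : x.toSet => tcl y) ⟨y, hy⟩).trans Set.subset_union_right

theorem mk_toSet_lt_of_mem_HSet {x : ZFSet} (hx : x ∈ HSet θ) : #x.toSet < θ := by
  refine lt_of_le_of_lt (Cardinal.mk_le_mk_of_subset ?_) hx
  rw [tcl_eq]
  exact Set.subset_union_left

theorem mem_HSet_iff (hθ : θ.IsRegular) {x : ZFSet} :
    x ∈ HSet θ ↔ (∀ y ∈ x, y ∈ HSet θ) ∧ #x.toSet < θ := by
  refine ⟨fun hx => ⟨isTransitiveClass_HSet θ x hx, mk_toSet_lt_of_mem_HSet hx⟩, ?_⟩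
  rintro ⟨hx, hcard⟩
  change #(tcl x) < θ
  rw [tcl_eq]
  refine (Cardinal.mk_union_le _ _).trans_lt (Cardinal.add_lt_of_lt hθ.aleph0_le hcard ?_)
  rw [Cardinal.card_iUnion_lt_iff_forall_of_isRegular hθ hcard]
  exact fun y => hx y.1 y.2

theorem unorderedPair_mem_HSet (hθ : θ.IsRegular) {x y : ZFSet} (hx : x ∈ HSet θ)
    (hy : y ∈ HSet θ) : ({x, y} : ZFSet) ∈ HSet θ := by
  refine (mem_HSet_iff hθ).2 ⟨fun z hz => ?_, ?_⟩
  · rcases ZFSet.mem_pair.1 hz with rfl | rfl <;> assumption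
  · have hfin : ({x, y} : ZFSet).toSet.Finite :=
      (Set.toFinite {x, y}).subset fun z hz => ZFSet.mem_pair.1 hz
    exact hfin.lt_aleph0.trans_le hθ.aleph0_le

theorem pair_mem_HSet (hθ : θ.IsRegular) {x y : ZFSet} (hx : x ∈ HSet θ) (hy : y ∈ HSet θ) :
    ZFSet.pair x y ∈ HSet θ := by
  have hxx : ({x} : ZFSet) ∈ HSet θ := by simpa using unorderedPair_mem_HSet hθ hx hx
  exact unorderedPair_mem_HSet hθ hxx (unorderedPair_mem_HSet hθ hx hy)

theorem mk_toZFSet_toSet (o : Ordinal) : #o.toZFSet.toSet = #(Set.Iio o) := by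
  have ho : o.toZFSet.toSet = Ordinal.toZFSet '' Set.Iio o := Ordinal.coe_toZFSet
  rw [ho, Cardinal.mk_image_eq Ordinal.toZFSet_injective]

theorem toZFSet_mem_HSet_iff (hθ : θ.IsRegular) (o : Ordinal) :
    o.toZFSet ∈ HSet θ ↔ #(Set.Iio o) < θ := by
  refine ⟨fun ho => mk_toZFSet_toSet o ▸ mk_toSet_lt_of_mem_HSet ho, fun ho => ?_⟩
  induction o using WellFoundedLT.induction with
  | ind o ih =>
    refine (mem_HSet_iff hθ).2 ⟨fun y hy => ?_, (mk_toZFSet_toSet o).trans_lt ho⟩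
    obtain ⟨a, ha, rfl⟩ := Ordinal.mem_toZFSet_iff.1 hy
    exact ih a ha ((Cardinal.mk_le_mk_of_subset (Set.Iio_subset_Iio ha.le)).trans_lt ho)

theorem exists_inverse_graph_mem_HSet (hθ : θ.IsRegular) {T : ZFSet} (hT : T ∈ HSet θ)
    {e : T.toSet → ZFSet} (he : Function.Injective e) (heθ : ∀ t, e t ∈ HSet θ) :
    ∃ g ∈ HSet θ, IsFunctional g ∧ ∀ t, ZFSet.pair (e t) t ∈ g := by
  have : Small T.toSet := ZFSet.small_coe T
  let g : ZFSet := ZFSet.range fun t : T.toSet => ZFSet.pair (e t) t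
  refine ⟨g, (mem_HSet_iff hθ).2 ⟨fun y hy => ?_, ?_⟩, ?_, fun t => ZFSet.mem_range.2 ⟨t, rfl⟩⟩
  · obtain ⟨t, rfl⟩ := ZFSet.mem_range.1 hy
    exact pair_mem_HSet hθ (heθ t) (isTransitiveClass_HSet θ T hT t t.2)
  · have hg : g.toSet = Set.range fun t : T.toSet => ZFSet.pair (e t) t := ZFSet.coe_range _
    rw [hg]
    exact Cardinal.mk_range_le.trans_lt (mk_toSet_lt_of_mem_HSet hT)
  · intro a b c hb hc
    obtain ⟨s, hs⟩ := ZFSet.mem_range.1 hb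
    obtain ⟨t, ht⟩ := ZFSet.mem_range.1 hc
    obtain ⟨hsa, rfl⟩ := ZFSet.pair_injective hs
    obtain ⟨hta, rfl⟩ := ZFSet.pair_injective ht
    rw [he (hsa.trans hta.symm)]

theorem mk_le_iff_exists_functional (hθ : θ.IsRegular) {x y : ZFSet} (hx : x ∈ HSet θ)
    (hy : y ∈ HSet θ) : #x.toSet ≤ #y.toSet ↔
      ∃ g ∈ HSet θ, IsFunctional g ∧ ∀ s ∈ x, ∃ c ∈ y, ZFSet.pair c s ∈ g := by
  constructor
  · rintro ⟨e⟩
    obtain ⟨g, hg, hfun, hpair⟩ := exists_inverse_graph_mem_HSet hθ hx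
      (Subtype.val_injective.comp e.injective)
      fun t => isTransitiveClass_HSet θ y hy _ (e t).2
    exact ⟨g, hg, hfun, fun s hs => ⟨_, (e ⟨s, hs⟩).2, hpair ⟨s, hs⟩⟩⟩
  · rintro ⟨g, -, hfun, hpair⟩
    choose c hc hcg using fun s : x.toSet => hpair s s.2
    refine Cardinal.mk_le_of_injective (f := fun s => (⟨c s, hc s⟩ : y.toSet)) fun s t hst => ?_
    have hst : c s = c t := congrArg Subtype.val hst
    exact Subtype.ext (hfun _ _ _ (hcg s) (hst ▸ hcg t))

theorem definable_mk_le (hθ : θ.IsRegular) {A : Set (HSet θ)} {α : Type*} (i j : α) :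
    A.Definable Language.order {v | #(v i).1.toSet ≤ #(v j).1.toSet} := by
  have hS := isTransitiveClass_HSet θ
  have h : A.Definable Language.order {v : α → HSet θ | ∃ g : HSet θ, IsFunctional g.1 ∧
      ∀ s ∈ (v i).1, ∃ c ∈ (v j).1, ZFSet.pair c s ∈ g.1} :=
    definable_exists ((definable_isFunctional hS none).inter
      (definable_forall_mem hS (some i) (definable_exists_mem hS (some (some j))
        (definable_pair_mem hS none (some none) (some (some none))))))
  convert! h using 1
  ext v
  exact (mk_le_iff_exists_functional hθ (v i).2 (v j).2).trans
    ⟨fun ⟨g, hg, hxy⟩ => ⟨⟨g, hg⟩, hxy⟩, fun ⟨g, hxy⟩ => ⟨g, g.2, hxy⟩⟩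

/-- Every element of `T` is the value of the function `f`, given as a set of Kuratowski pairs
`(b, t)`, at some ordinal `b` of smaller cardinality than `T`. Nothing is required of the other
arguments and values of `f`. -/
def IsShortEnumeration (f T : ZFSet) : Prop :=
  IsFunctional f ∧
    ∀ t ∈ T, ∃ b, ZFSet.pair b t ∈ f ∧ b.IsOrdinal ∧ #b.toSet < #T.toSet

theorem exists_isShortEnumeration_mem_HSet (hθ : θ.IsRegular) {T : ZFSet} (hT : T ∈ HSet θ) :
    ∃ f ∈ HSet θ, IsShortEnumeration f T := by
  obtain ⟨e⟩ : Nonempty (T.toSet ≃ Set.Iio T.card.ord) := by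
    rw [← Cardinal.eq, Cardinal.mk_Iio_ordinal, Cardinal.card_ord]
    exact T.cardinalMk_coe_sort
  have hlt (t : T.toSet) : #(Set.Iio (e t).1) < #T.toSet := by
    rw [Cardinal.mk_Iio_ordinal, show #T.toSet = _ from T.cardinalMk_coe_sort,
      Cardinal.lift_lt, ← Cardinal.lt_ord]
    exact (e t).2
  obtain ⟨f, hf, hfun, hpair⟩ := exists_inverse_graph_mem_HSet hθ hT
    (Ordinal.toZFSet_injective.comp (Subtype.val_injective.comp e.injective))
    fun t => (toZFSet_mem_HSet_iff hθ _).2 ((hlt t).trans (mk_toSet_lt_of_mem_HSet hT))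
  refine ⟨f, hf, hfun, fun t ht => ⟨_, hpair ⟨t, ht⟩, ZFSet.isOrdinal_toZFSet _, ?_⟩⟩
  exact (mk_toZFSet_toSet _).trans_lt (hlt ⟨t, ht⟩)

theorem definable_isShortEnumeration (hθ : θ.IsRegular) {A : Set (HSet θ)} {α : Type*}
    (i j : α) : A.Definable Language.order {v | IsShortEnumeration (v i).1 (v j).1} := by
  have hS := isTransitiveClass_HSet θ
  have h : A.Definable Language.order {v : α → HSet θ | IsFunctional (v i).1 ∧
      ∀ t ∈ (v j).1, ∃ b : HSet θ, ZFSet.pair b.1 t ∈ (v i).1 ∧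
        b.1.IsOrdinal ∧ ¬ #(v j).1.toSet ≤ #b.1.toSet} :=
    (definable_isFunctional hS i).inter (definable_forall_mem hS j (definable_exists
      ((definable_pair_mem hS none (some none) (some (some i))).inter
        ((definable_isOrdinal hS none).inter (definable_mk_le hθ (some (some j)) none).compl))))
  convert! h using 1
  ext v
  refine and_congr_right fun _ => forall₂_congr fun t _ => ?_
  simp only [not_le]
  exact ⟨fun ⟨b, hb, hbo⟩ => ⟨⟨b, (hS.mem_of_pair_mem (v i).2 hb).1⟩, hb, hbo⟩,
    fun ⟨b, hb, hbo⟩ => ⟨b, hb, hbo⟩⟩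

theorem ElemSub.subset_of_mem {M : Set ZFSet} (hθ : θ.IsRegular) (hM : ElemSub M (HSet θ))
    {T : ZFSet} (hT : T ∈ M)
    (hord : ∀ b : ZFSet, b.IsOrdinal → #b.toSet < #T.toSet → b ∈ M) : T.toSet ⊆ M := by
  have hS := isTransitiveClass_HSet θ
  obtain ⟨f, hf, hfun, henum⟩ : ∃ f : HSet θ, f.1 ∈ M ∧ IsShortEnumeration f.1 T := by
    obtain ⟨f, hf, henum⟩ := exists_isShortEnumeration_mem_HSet hθ (hM.1 hT)
    exact hM.exists_mem (definable_isShortEnumeration hθ none (some ()))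
      (c := fun _ => ⟨T, hM.1 hT⟩) (fun _ => hT) ⟨⟨f, hf⟩, henum⟩
  intro t ht
  obtain ⟨b, hbt, hbo, hcard⟩ := henum t ht
  have hb : b ∈ M := hord b hbo hcard
  obtain ⟨s, hs, hbs⟩ : ∃ s : HSet θ, s.1 ∈ M ∧ ZFSet.pair b s.1 ∈ f.1 :=
    hM.exists_mem (definable_pair_mem hS (some 0) none (some 1))
      (c := ![⟨b, hM.1 hb⟩, f]) (Fin.forall_fin_two.2 ⟨hb, hf⟩)
      ⟨⟨t, hS T (hM.1 hT) t ht⟩, hbt⟩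
  exact hfun b t s hbt hbs ▸ hs

end HereditaryCardinality

theorem le_revLe_self {T p : ZFSet} (lt : ZFSet) (hp : p ∈ T) : Le (revLe T lt) p p := by
  refine ZFSet.mem_sep.2 ⟨?_, p, hp, p, hp, rfl, Or.inl rfl⟩
  have hsingleton : ({p} : ZFSet) ∈ T.powerset := by
    rw [ZFSet.mem_powerset]
    intro y hy
    rwa [ZFSet.mem_singleton.1 hy]
  rw [ZFSet.mem_powerset]
  intro x hx
  have hx : x = {p} := by simpa [ZFSet.pair] using hx
  rwa [hx]

theorem mGenericCond_of_subset {P le M : ZFSet} (hrefl : ∀ p ∈ P, Le le p p)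
    (hPM : P.toSet ⊆ M.toSet) (q : ZFSet) : MGenericCond P le M q := by
  intro D hD _ r hr _
  obtain ⟨s, hs, hsr⟩ := hD.2 r hr
  exact ⟨s, ⟨hPM (hD.1 hs), hs⟩, s, hD.1 hs, hrefl s (hD.1 hs), hsr⟩

theorem tree_forcing_proper_for_size_omega1_general (P le : ZFSet)
    (hrefl : ∀ p ∈ P, Le le p p) (hcard : Cardinal.mk P.toSet ≤ Cardinal.aleph 1) :
    ProperForSizeOmega1 P le := by
  refine ⟨0, fun θ _ hθ M ⟨hM, hPM, _, hω, _⟩ p _ hp => ⟨p, hp, hrefl p hp, ?_⟩⟩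
  refine mGenericCond_of_subset hrefl (hM.subset_of_mem hθ hPM fun b hbo hb => hω b hbo ?_) p
  rw [Ctble, ← Cardinal.le_aleph0_iff_set_countable, ← Order.lt_succ_iff, Cardinal.succ_aleph0]
  exact hb.trans_le hcard

/-- If `(T, <_T)` is a tree of height and size `ω₁`, then the forcing
notion `(T, ≥_T)` is proper for models of size `ω₁`. -/
theorem tree_forcing_proper_for_size_omega1 (T lt : ZFSet) (htree : IsTree T lt)
    (hsize : Cardinal.mk ↥T.toSet = Cardinal.aleph 1) (hheight : HeightOmega1 T lt) :
    ProperForSizeOmega1 T (revLe T lt) :=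
  tree_forcing_proper_for_size_omega1_general T (revLe T lt)
    (fun _ => le_revLe_self lt) hsize.le

end GuessingPaper
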